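/- arXiv:2501.03470 — 2 statements merged into one kernel-verified Lean document; each statement's English description precedes it below -/
import Mathlib

section
/- Let F ∈ S[x]^p be positive definite on the compact set {x : H_j(x) ⪰ 0, j = 1,…,t} and assume the matrix quadratic module Q^p(H₁,…,H_t) is Archimedean. Then F(x) = Σ₀(x) + Σ_{j=1}^t ⟨Σ_j(x), H_j(x)⟩_p for SOS matrices Σ₀ ∈ S[x]^p, Σ_j ∈ S[x]^{p r_j}. (Multi-constraint Scherer–Hol Positivstellensatz, derived from the single-constraint case via block-diagonal aggregation.) -/
open MeasureTheory MvPolynomial Matrix Finset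

noncomputable section

/-- A polynomial matrix is an SOS matrix if it factors as `Tᵀ * T`. -/
def IsSOSMatrix {σ : Type*} {ι : Type*} [Fintype ι]
    (M : Matrix ι ι (MvPolynomial σ ℝ)) : Prop :=
  ∃ (l : ℕ) (T : Matrix (Fin l) ι (MvPolynomial σ ℝ)), M = Tᵀ * T

/-- A polynomial is a sum of squares. -/
def IsSOSPoly {σ : Type*} (f : MvPolynomial σ ℝ) : Prop :=
  ∃ (l : ℕ) (g : Fin l → MvPolynomial σ ℝ), f = ∑ i, (g i) ^ 2

/-- The block-trace bilinear map `⟨A,B⟩_p = Tr_p (Aᵀ (I_p ⊗ B))`. -/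
def lram {R : Type*} [CommSemiring R] {ιp ιq : Type*} [Fintype ιq]
    (A : Matrix (ιp × ιq) (ιp × ιq) R) (B : Matrix ιq ιq R) :
    Matrix ιp ιp R :=
  Matrix.of fun i j => ∑ a : ιq, ∑ c : ιq, A (j, c) (i, a) * B c a

/-- The `x`-part of an exponent in the variables `x ⊕ y`. -/
def xPart {n m : ℕ} (d : (Fin n ⊕ Fin m) →₀ ℕ) : Fin n →₀ ℕ :=
  Finsupp.comapDomain Sum.inl d Sum.inl_injective.injOn

/-- Integrate out the `y`-variables of a polynomial in `(x, y)` against the measure `ν`: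
`∫_Y Σ_β H_β(x) y^β dν := Σ_β H_β(x) ∫_Y y^β dν`. -/
def integY {n m : ℕ} (ν : Measure (Fin m → ℝ))
    (q : MvPolynomial (Fin n ⊕ Fin m) ℝ) : MvPolynomial (Fin n) ℝ :=
  ∑ d ∈ q.support, MvPolynomial.monomial (xPart d)
    (q.coeff d * ∫ y, ∏ j : Fin m, (y j) ^ (d (Sum.inr j)) ∂ν)

/-- All polynomial moments of `ν` are finite. -/
def momentsFinite {m : ℕ} (ν : Measure (Fin m → ℝ)) : Prop :=
  ∀ h : MvPolynomial (Fin m) ℝ, Integrable (fun y => |MvPolynomial.eval y h|) ν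

/-- `ν` has support exactly `Y`. -/
def hasSupport {m : ℕ} (ν : Measure (Fin m → ℝ)) (Y : Set (Fin m → ℝ)) : Prop :=
  ν Yᶜ = 0 ∧ ∀ U : Set (Fin m → ℝ), IsOpen U → (U ∩ Y).Nonempty → 0 < ν U

/-- The multivariate Carleman condition on `ν`. -/
def Carleman {m : ℕ} (ν : Measure (Fin m → ℝ)) : Prop :=
  ∀ j : Fin m, ¬ Summable (fun d : ℕ =>
    (∫ y, (y j) ^ (2 * (d + 1)) ∂ν) ^ (-(1 : ℝ) / (2 * (d + 1))))

/-- Evaluate a polynomial matrix at a point. -/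
def evalMat {σ : Type*} {ι : Type*} (x : σ → ℝ)
    (M : Matrix ι ι (MvPolynomial σ ℝ)) : Matrix ι ι ℝ :=
  M.map (MvPolynomial.eval x)

/-- The spectral (L²-operator) norm of a real matrix. -/
def specNorm {ι : Type*} [Fintype ι] [DecidableEq ι] (A : Matrix ι ι ℝ) : ℝ :=
  ‖(Matrix.toEuclideanLin A).toContinuousLinearMap‖

/-- Degree of a polynomial matrix. -/
def matDeg {ι σ : Type*} [Fintype ι] (M : Matrix ι ι (MvPolynomial σ ℝ)) : ℕ :=
  Finset.univ.sup fun i => Finset.univ.sup fun j => (M i j).totalDegree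

/-- Degree in `x` of a polynomial in `(x,y)`. -/
def degX {n m : ℕ} (q : MvPolynomial (Fin n ⊕ Fin m) ℝ) : ℕ :=
  q.support.sup fun d => ∑ i : Fin n, d (Sum.inl i)

/-- Degree in `y` of a polynomial in `(x,y)`. -/
def degY {n m : ℕ} (q : MvPolynomial (Fin n ⊕ Fin m) ℝ) : ℕ :=
  q.support.sup fun d => ∑ j : Fin m, d (Sum.inr j)

def matDegX {ι : Type*} {n m : ℕ} [Fintype ι]
    (M : Matrix ι ι (MvPolynomial (Fin n ⊕ Fin m) ℝ)) : ℕ :=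
  Finset.univ.sup fun i => Finset.univ.sup fun j => degX (M i j)

def matDegY {ι : Type*} {n m : ℕ} [Fintype ι]
    (M : Matrix ι ι (MvPolynomial (Fin n ⊕ Fin m) ℝ)) : ℕ :=
  Finset.univ.sup fun i => Finset.univ.sup fun j => degY (M i j)

/-- Homogeneity in `x` of a polynomial in `(x,y)`. -/
def IsHomogeneousX {n m : ℕ} (q : MvPolynomial (Fin n ⊕ Fin m) ℝ) (k : ℕ) : Prop :=
  ∀ d ∈ q.support, ∑ i : Fin n, d (Sum.inl i) = k

/-- Positive semidefiniteness of the full (infinite) moment matrix `M(S)`: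
every finite principal block submatrix is PSD. -/
def MomentPSD {n p : ℕ} (S : (Fin n →₀ ℕ) → Matrix (Fin p) (Fin p) ℝ) : Prop :=
  ∀ (N : ℕ) (idx : Fin N → (Fin n →₀ ℕ)),
    (Matrix.of fun a b : Fin N × Fin p => S (idx a.1 + idx b.1) a.2 b.2).PosSemidef

/-- Exponents of degree at most `d` in `n` variables. -/
def Expo (n d : ℕ) := {a : Fin n → Fin (d + 1) // ∑ i, (a i : ℕ) ≤ d}

instance (n d : ℕ) : Fintype (Expo n d) := by unfold Expo; infer_instance
instance (n d : ℕ) : DecidableEq (Expo n d) := by unfold Expo; infer_instance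

def expF {n d : ℕ} (a : Fin n → Fin (d + 1)) : Fin n →₀ ℕ :=
  Finsupp.equivFunOnFinite.symm (fun i => (a i : ℕ))

/-- Truncated moment matrix `M_d(S)`. -/
def momentMat {n p : ℕ} (S : (Fin n →₀ ℕ) → Matrix (Fin p) (Fin p) ℝ) (d : ℕ) :
    Matrix (Expo n d × Fin p) (Expo n d × Fin p) ℝ :=
  Matrix.of fun a b => S (expF a.1.1 + expF b.1.1) a.2 b.2

/-- Truncated localizing matrix `M^ν_{d,k}(G S)`. -/
def locMat {n m p q : ℕ} (ν : Measure (Fin m → ℝ))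
    (G : Matrix (Fin q) (Fin q) (MvPolynomial (Fin n ⊕ Fin m) ℝ))
    (S : (Fin n →₀ ℕ) → Matrix (Fin p) (Fin p) ℝ) (d k : ℕ) :
    Matrix ((Expo n d × Expo m k) × (Fin p × Fin q))
           ((Expo n d × Expo m k) × (Fin p × Fin q)) ℝ :=
  Matrix.of fun r c =>
    ∑ e ∈ (G r.2.2 c.2.2).support,
      (∫ y, ∏ j : Fin m, (y j) ^ (e (Sum.inr j) + (r.1.2.1 j : ℕ) + (c.1.2.1 j : ℕ)) ∂ν) *
      ((G r.2.2 c.2.2).coeff e *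
        S (expF r.1.1.1 + expF c.1.1.1 + xPart e) r.2.1 c.2.1)

/-- The Riesz functional `L_S(H) = Σ_α tr(H_α S_α)`. -/
def RieszL {n p : ℕ} (S : (Fin n →₀ ℕ) → Matrix (Fin p) (Fin p) ℝ)
    (H : Matrix (Fin p) (Fin p) (MvPolynomial (Fin n) ℝ)) : ℝ :=
  ∑ i, ∑ j, ∑ α ∈ (H i j).support, (H i j).coeff α * S α j i

end

/-- A log-convex nonnegative sequence of growth at most `K ^ m` satisfies `c 1 ≤ K * c 0`. -/
theorem logConvex_one_le_mul_zero {c : ℕ → ℝ} {K N : ℝ} (hc : ∀ m, 0 ≤ c m) (hK : 0 < K)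
    (hlog : ∀ m, c (m + 1) ^ 2 ≤ c m * c (m + 2)) (hbd : ∀ m, c m ≤ N * K ^ m) :
    c 1 ≤ K * c 0 := by
  by_contra! hlt
  have h1 : 0 < c 1 := lt_of_le_of_lt (mul_nonneg hK.le (hc 0)) hlt
  have h0 : 0 < c 0 := by
    refine (hc 0).lt_of_ne fun h => ?_
    have := hlog 0
    rw [← h, zero_mul] at this
    simp only [zero_add] at this
    nlinarith
  set ρ := c 1 / c 0 with hρ
  have hρK : K < ρ := by rw [hρ, lt_div_iff₀ h0]; exact hlt
  have hρ0 : 0 < ρ := hK.trans hρK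
  have hstep : ∀ m, 0 < c m ∧ ρ * c m ≤ c (m + 1) := by
    intro m
    induction m with
    | zero => exact ⟨h0, by rw [hρ]; field_simp; simp⟩
    | succ m ih =>
      have hpos : 0 < c (m + 1) := lt_of_lt_of_le (mul_pos hρ0 ih.1) ih.2
      refine ⟨hpos, ?_⟩
      have h := hlog m
      have h2 : ρ * c m * c (m + 1) ≤ c m * c (m + 2) :=
        (mul_le_mul_of_nonneg_right ih.2 hpos.le).trans (by nlinarith)
      exact le_of_mul_le_mul_left (by linarith) ih.1
  have hgrow : ∀ m, c 0 * ρ ^ m ≤ c m := by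
    intro m
    induction m with
    | zero => simp
    | succ m ih =>
      calc c 0 * ρ ^ (m + 1) = ρ * (c 0 * ρ ^ m) := by ring
        _ ≤ ρ * c m := by gcongr
        _ ≤ _ := (hstep m).2
  obtain ⟨m, hm⟩ := pow_unbounded_of_one_lt (N / c 0) ((one_lt_div hK).2 hρK)
  rw [div_pow, div_lt_div_iff₀ h0 (pow_pos hK m)] at hm
  linarith [hgrow m, hbd m]

section PureState

variable {R V : Type*} [CommRing R] [Algebra ℝ R] [AddCommGroup V] [Module ℝ V] [Module R V]
  [IsScalarTower ℝ R V]

/-- The states of the cone `M` with order unit `u`, as a set of functions. -/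
def stateSet (M : PointedCone ℝ V) (u : V) : Set (V → ℝ) :=
  {g | ((∀ x y, g (x + y) = g x + g y) ∧ ∀ (c : ℝ) x, g (c • x) = c * g x) ∧
    (∀ m ∈ M, 0 ≤ g m) ∧ g u = 1}

theorem coe_mem_stateSet {M : PointedCone ℝ V} {u : V} {L : V →ₗ[ℝ] ℝ}
    (hL : ∀ m ∈ M, 0 ≤ L m) (hu : L u = 1) : ⇑L ∈ stateSet M u :=
  ⟨⟨map_add L, fun c x => by simp⟩, hL, hu⟩

theorem exists_linearMap_of_mem_stateSet {M : PointedCone ℝ V} {u : V} {g : V → ℝ}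
    (hg : g ∈ stateSet M u) : ∃ L : V →ₗ[ℝ] ℝ, ⇑L = g :=
  ⟨{ toFun := g, map_add' := hg.1.1, map_smul' := by simpa using hg.1.2 }, rfl⟩

theorem isCompact_stateSet {M : PointedCone ℝ V} {u : V}
    (hu : ∀ v, ∃ N : ℝ, N • u + v ∈ M) : IsCompact (stateSet M u) := by
  choose N hN using hu
  refine IsCompact.of_isClosed_subset
    (isCompact_univ_pi fun v => isCompact_Icc (a := -N v) (b := N (-v))) ?_ ?_
  · simp only [stateSet, Set.ofPred_and, Set.ofPred_forall]
    refine ((isClosed_iInter fun x => isClosed_iInter fun y => ?_).inter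
      (isClosed_iInter fun c => isClosed_iInter fun x => ?_)).inter
      ((isClosed_iInter fun m => isClosed_iInter fun _ => ?_).inter ?_)
    · exact isClosed_eq (by fun_prop) (by fun_prop)
    · exact isClosed_eq (by fun_prop) (by fun_prop)
    · exact isClosed_le (by fun_prop) (by fun_prop)
    · exact isClosed_eq (by fun_prop) (by fun_prop)
  · intro g hg v _
    obtain ⟨L, rfl⟩ := exists_linearMap_of_mem_stateSet hg
    have h1 := hg.2.1 _ (hN v)
    have h2 := hg.2.1 _ (hN (-v))
    simp only [map_add, map_smul, map_neg, hg.2.2, smul_eq_mul, mul_one] at h1 h2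
    exact ⟨by linarith, by linarith⟩

/-- A point outside a cone with order unit is weakly separated from it by a state. -/
theorem exists_state_nonpos {M : PointedCone ℝ V} {u f : V}
    (hu : ∀ v, ∃ N : ℝ, N • u + v ∈ M) (huM : u ∈ M) (hf : f ∉ M) :
    ∃ g ∈ stateSet M u, g f ≤ 0 := by
  have hsmul : ∀ {c : ℝ} {m : V}, 0 ≤ c → m ∈ M → c • m ∈ M := fun hc hm =>
    PointedCone.smul_mem M hc hm
  have hneg : -u ∉ M := by
    intro h
    obtain ⟨N, hN⟩ := hu f
    apply hf
    have := M.add_mem hN (hsmul (abs_nonneg N) h)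
    have := M.add_mem this (hsmul (sub_nonneg.2 (le_abs_self N)) huM)
    convert this using 1
    module
  have hu0 : u ≠ 0 := by
    rintro rfl
    exact hneg (by simp)
  obtain ⟨L, hL1, hL2⟩ := riesz_extension (M ⊔ PointedCone.hull ℝ {-f})
    (LinearPMap.mkSpanSingleton u (1 : ℝ) hu0) (by
      rintro ⟨x, hx⟩ hxM
      obtain ⟨c, rfl⟩ := Submodule.mem_span_singleton.1 hx
      rw [LinearPMap.mkSpanSingleton'_apply]
      simp only [RingHom.id_apply, smul_eq_mul, mul_one]
      by_contra! hc
      obtain ⟨m, hm, z, hz, hmz⟩ := Submodule.mem_sup.1 hxM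
      obtain ⟨s, rfl⟩ := Submodule.mem_span_singleton.1 hz
      obtain ⟨s, hs⟩ := s
      replace hmz : m + s • (-f) = c • u := hmz
      rcases hs.eq_or_lt with rfl | hs
      · apply hneg
        have := hsmul (inv_nonneg.2 (neg_nonneg.2 hc.le)) hm
        rw [zero_smul, add_zero] at hmz
        rw [hmz, smul_smul] at this
        convert this using 1
        rw [inv_neg, neg_mul, inv_mul_cancel₀ hc.ne, neg_one_smul]
      · apply hf
        have := hsmul (inv_nonneg.2 hs.le) (M.add_mem hm (hsmul (neg_nonneg.2 hc.le) huM))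
        have h2 : m + (-c) • u = s • f := by
          rw [neg_smul, ← hmz]; module
        rw [h2, smul_smul, inv_mul_cancel₀ hs.ne', one_smul] at this
        exact this)
    (by
      intro y
      obtain ⟨N, hN⟩ := hu y
      exact ⟨⟨N • u, Submodule.mem_span_singleton.2 ⟨N, rfl⟩⟩, Submodule.mem_sup_left hN⟩)
  refine ⟨L, coe_mem_stateSet (fun m hm => hL2 m (Submodule.mem_sup_left hm)) ?_, ?_⟩
  · have := hL1 ⟨(1 : ℝ) • u, Submodule.mem_span_singleton.2 ⟨1, rfl⟩⟩
    have h2 := this.trans (LinearPMap.mkSpanSingleton'_apply u (1 : ℝ) _ 1 _)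
    simpa using h2
  · have := hL2 (-f) (Submodule.mem_sup_right (Submodule.subset_span rfl))
    simpa using this

/-- A point outside a cone with order unit is weakly separated from it by a pure state. -/
theorem exists_extreme_state_nonpos {M : PointedCone ℝ V} {u f : V}
    (hu : ∀ v, ∃ N : ℝ, N • u + v ∈ M) (huM : u ∈ M) (hf : f ∉ M) :
    ∃ g ∈ (stateSet M u).extremePoints ℝ, g f ≤ 0 := by
  obtain ⟨g₀, hg₀, hg₀f⟩ := exists_state_nonpos hu huM hf
  have hcpt := isCompact_stateSet hu
  obtain ⟨g₁, hg₁, hmin⟩ := hcpt.exists_isMinOn ⟨g₀, hg₀⟩ (continuous_apply f).continuousOn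
  have hmin' : ∀ g ∈ stateSet M u, g₁ f ≤ g f := fun g hg => hmin hg
  have hcl : IsClosed {g : V → ℝ | g f = g₁ f} := isClosed_eq (by fun_prop) (by fun_prop)
  obtain ⟨g, hg⟩ := (hcpt.inter_right hcl).extremePoints_nonempty ⟨g₁, hg₁, rfl⟩
  have hext : IsExtreme ℝ (stateSet M u) (stateSet M u ∩ {g | g f = g₁ f}) := by
    refine ⟨Set.inter_subset_left, ?_⟩
    rintro x hx y hy z ⟨-, hz⟩ ⟨a, b, ha, hb, hab, rfl⟩
    refine ⟨hx, le_antisymm ?_ (hmin' x hx)⟩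
    have hz' : a * x f + b * y f = g₁ f := hz
    have h2 := mul_le_mul_of_nonneg_left (hmin' y hy) hb.le
    refine le_of_mul_le_mul_left ?_ ha
    have : g₁ f = a * g₁ f + b * g₁ f := by rw [← add_mul, hab, one_mul]
    linarith
  refine ⟨g, hext.extremePoints_subset_extremePoints hg, ?_⟩
  have : g f = g₁ f := hg.1.2
  linarith [hmin' g₀ hg₀]

/-- Multiplication by a square is dominated, in a state, by its bound on the order unit. -/
theorem state_sq_smul_le {M : PointedCone ℝ V} {u : V}
    (hu : ∀ v, ∃ N : ℝ, N • u + v ∈ M) (huM : u ∈ M) (hsq : ∀ (a : R), ∀ m ∈ M, a ^ 2 • m ∈ M)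
    {L : V →ₗ[ℝ] ℝ} (hL : ∀ m ∈ M, 0 ≤ L m) (hLu : L u = 1) {a : R} {K : ℝ} (hK : 0 < K)
    (ha : K • u - a ^ 2 • u ∈ M) {m : V} (hm : m ∈ M) : L (a ^ 2 • m) ≤ K * L m := by
  obtain ⟨N, hN⟩ := hu (-m)
  have hsqL : ∀ (b : R), ∀ v ∈ M, 0 ≤ L (b ^ 2 • v) := fun b v hv => hL _ (hsq b v hv)
  have hub : ∀ j : ℕ, L (a ^ (2 * j) • u) ≤ K ^ j := by
    intro j
    induction j with
    | zero => simp [hLu]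
    | succ j ih =>
      have h := hsqL (a ^ j) _ ha
      have e : (a ^ j) ^ 2 • (K • u - a ^ 2 • u)
          = K • (a ^ (2 * j) • u) - a ^ (2 * (j + 1)) • u := by
        rw [smul_sub, smul_comm, smul_smul, ← pow_mul, ← pow_add, mul_comm j 2, mul_add, mul_one]
      rw [e, map_sub, map_smul, smul_eq_mul] at h
      calc _ ≤ K * L (a ^ (2 * j) • u) := by linarith
        _ ≤ K * K ^ j := by gcongr
        _ = _ := by ring
  have hNK : ∀ j : ℕ, L (a ^ (2 * j) • m) ≤ |N| * K ^ j := by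
    intro j
    have h := hsqL (a ^ j) _ hN
    have e : (a ^ j) ^ 2 • (N • u + -m) = N • (a ^ (2 * j) • u) - a ^ (2 * j) • m := by
      rw [smul_add, smul_comm, smul_neg, ← pow_mul, mul_comm j 2, sub_eq_add_neg]
    rw [e, map_sub, map_smul, smul_eq_mul] at h
    have h0 : 0 ≤ L (a ^ (2 * j) • u) := by
      simpa only [← pow_mul, mul_comm] using hsqL (a ^ j) u huM
    calc _ ≤ N * L (a ^ (2 * j) • u) := by linarith
      _ ≤ |N| * L (a ^ (2 * j) • u) := by gcongr; exact le_abs_self N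
      _ ≤ _ := by gcongr; exact hub j
  have key := logConvex_one_le_mul_zero (c := fun j => L (a ^ (2 * j) • m)) (K := K) (N := |N|)
    (fun j => by simpa only [← pow_mul, mul_comm] using hsqL (a ^ j) m hm) hK ?_ hNK
  · simpa using key
  · intro j
    have hquad : ∀ t : ℝ, 0 ≤ L (a ^ (2 * j) • m) * (t * t)
        + 2 * L (a ^ (2 * (j + 1)) • m) * t + L (a ^ (2 * (j + 2)) • m) := by
      intro t
      have h := hsqL (t • a ^ j + a ^ (j + 2)) m hm
      have e : (t • a ^ j + a ^ (j + 2)) ^ 2 • m = (t * t) • (a ^ (2 * j) • m)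
          + (2 * t) • (a ^ (2 * (j + 1)) • m) + a ^ (2 * (j + 2)) • m := by
        simp only [← smul_assoc, ← add_smul]
        congr 1
        simp only [Algebra.smul_def, map_mul, map_ofNat]
        ring
      rw [e] at h
      simp only [map_add, map_smul, smul_eq_mul] at h
      linarith
    have := discrim_le_zero hquad
    rw [discrim] at this
    nlinarith

/-- A pure state is multiplicative over the centre. -/
theorem extreme_state_smul {M : PointedCone ℝ V} {u : V}
    (hu : ∀ v, ∃ N : ℝ, N • u + v ∈ M) (huM : u ∈ M)
    (hsq : ∀ (a : R), ∀ m ∈ M, a ^ 2 • m ∈ M)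
    {L : V →ₗ[ℝ] ℝ} (hL : ⇑L ∈ (stateSet M u).extremePoints ℝ) (a : R) (v : V) :
    L (a • v) = L (a • u) * L v := by
  have hLM := hL.1.2.1
  have hLu := hL.1.2.2
  have main : ∀ (a : R) (v : V), L (a ^ 2 • v) = L (a ^ 2 • u) * L v := by
    intro a v
    obtain ⟨N, hN⟩ := hu (-(a ^ 2 • u))
    set τ := L (a ^ 2 • u) with hτ
    have hτ0 : 0 ≤ τ := hLM _ (hsq a u huM)
    set K := |N| + τ + 1
    have hK : 0 < K := by positivity
    have hKa : K • u - a ^ 2 • u ∈ M := by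
      have : 0 ≤ K - N := by linarith [le_abs_self N]
      convert M.add_mem hN (PointedCone.smul_mem M this huM) using 1
      change _ = N • u + -(a ^ 2 • u) + (K - N) • u
      module
    let A : V →ₗ[ℝ] ℝ := L ∘ₗ ((LinearMap.lsmul R V (a ^ 2)).restrictScalars ℝ)
    have hA : ∀ w, A w = L (a ^ 2 • w) := fun w => rfl
    have hτK : 0 < K - τ := by linarith [abs_nonneg N]
    have hg₁ : ⇑((1 + τ)⁻¹ • (L + A)) ∈ stateSet M u := by
      refine coe_mem_stateSet (fun m hm => ?_) ?_
      · have h1 := hLM _ hm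
        have h2 := hLM _ (hsq a m hm)
        simp only [LinearMap.smul_apply, LinearMap.add_apply, hA, smul_eq_mul]
        positivity
      · simp only [LinearMap.smul_apply, LinearMap.add_apply, hA, smul_eq_mul, hLu, ← hτ]
        exact inv_mul_cancel₀ (by positivity)
    have hg₂ : ⇑((K - τ)⁻¹ • (K • L - A)) ∈ stateSet M u := by
      refine coe_mem_stateSet (fun m hm => ?_) ?_
      · have h1 := state_sq_smul_le hu huM hsq hLM hLu hK hKa hm
        simp only [LinearMap.smul_apply, LinearMap.sub_apply, hA, smul_eq_mul]
        exact mul_nonneg (inv_nonneg.2 hτK.le) (by linarith)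
      · simp only [LinearMap.smul_apply, LinearMap.sub_apply, hA, smul_eq_mul, hLu, ← hτ, mul_one]
        exact inv_mul_cancel₀ hτK.ne'
    have hK1 : 0 < K + 1 := by linarith
    have hseg : ⇑L ∈ openSegment ℝ ⇑((1 + τ)⁻¹ • (L + A)) ⇑((K - τ)⁻¹ • (K • L - A)) := by
      refine ⟨(1 + τ) / (K + 1), (K - τ) / (K + 1), by positivity, by positivity, ?_, ?_⟩
      · field_simp; ring
      · funext w
        have : 1 + τ ≠ 0 := by positivity
        have := hτK.ne'
        simp only [Pi.add_apply, Pi.smul_apply, LinearMap.smul_apply, LinearMap.sub_apply,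
          LinearMap.add_apply, smul_eq_mul]
        field_simp
        ring
    have := congrFun (hL.2 hg₁ hg₂ hseg) v
    simp only [LinearMap.smul_apply, LinearMap.add_apply, hA, smul_eq_mul] at this
    have h1 : (1 + τ) ≠ 0 := by positivity
    field_simp at this
    linarith
  have e : ∀ w : V, a • w = (4⁻¹ : ℝ) • ((a + 1) ^ 2 • w - (a - 1) ^ 2 • w) := by
    intro w
    rw [← sub_smul, show (a + 1) ^ 2 - (a - 1) ^ 2 = (4 : ℝ) • a by
      rw [Algebra.smul_def, map_ofNat]; ring, smul_assoc, smul_smul]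
    norm_num
  rw [e v, e u]
  simp only [map_smul, map_sub, main _ v, smul_eq_mul]
  ring

/-- A point outside a square-closed cone with order unit is weakly separated from it by a state
which is multiplicative along a real character of the ring. -/
theorem exists_character_state {M : PointedCone ℝ V} {u f : V}
    (hu : ∀ v, ∃ N : ℝ, N • u + v ∈ M) (huM : u ∈ M)
    (hsq : ∀ (a : R), ∀ m ∈ M, a ^ 2 • m ∈ M) (hf : f ∉ M) :
    ∃ (L : V →ₗ[ℝ] ℝ) (φ : R →ₐ[ℝ] ℝ), (∀ m ∈ M, 0 ≤ L m) ∧ L u = 1 ∧ L f ≤ 0 ∧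
      ∀ a v, L (a • v) = φ a * L v := by
  obtain ⟨g, hg, hgf⟩ := exists_extreme_state_nonpos hu huM hf
  obtain ⟨L, rfl⟩ := exists_linearMap_of_mem_stateSet hg.1
  have hmul := extreme_state_smul hu huM hsq hg
  have hLu : L u = 1 := hg.1.2.2
  refine ⟨L, AlgHom.ofLinearMap
    (L ∘ₗ ((LinearMap.toSpanSingleton R V u).restrictScalars ℝ)) ?_ ?_,
    hg.1.2.1, hLu, hgf, hmul⟩
  · simpa using hLu
  · intro a b
    simp [mul_smul, hmul a (b • u)]

end PureState

theorem vecMulVec_transpose_mul_mul {R ι ρ : Type*} [CommRing R] [Fintype ρ] (t : ρ → R)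
    (B : Matrix ρ ρ R) (v : ι → R) :
    (vecMulVec t v)ᵀ * B * vecMulVec t v = (t ⬝ᵥ (B *ᵥ t)) • vecMulVec v v := by
  rw [transpose_vecMulVec, Matrix.mul_assoc, mul_vecMulVec, vecMulVec_mul_vecMulVec,
    vecMulVec_smul]

section QuadraticModule

variable {σ ι κ : Type*} {ρ : κ → Type*} [∀ j, Fintype (ρ j)]

/-- The matrix quadratic module generated by the polynomial matrices `H j`: finite sums of
`v vᵀ` and `Tᵀ (H j) T`. -/
noncomputable def matQuadModule (ι : Type*) (H : ∀ j, Matrix (ρ j) (ρ j) (MvPolynomial σ ℝ)) :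
    AddSubmonoid (Matrix ι ι (MvPolynomial σ ℝ)) :=
  AddSubmonoid.closure (Set.range (fun v => vecMulVec v v) ∪
    Set.range fun T : Σ j, Matrix (ρ j) ι (MvPolynomial σ ℝ) => T.2ᵀ * H T.1 * T.2)

variable {H : ∀ j, Matrix (ρ j) (ρ j) (MvPolynomial σ ℝ)}

theorem vecMulVec_self_mem_matQuadModule (v : ι → MvPolynomial σ ℝ) :
    vecMulVec v v ∈ matQuadModule ι H :=
  AddSubmonoid.subset_closure (Or.inl ⟨v, rfl⟩)

theorem transpose_mul_mul_mem_matQuadModule (j : κ) (T : Matrix (ρ j) ι (MvPolynomial σ ℝ)) :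
    Tᵀ * H j * T ∈ matQuadModule ι H :=
  AddSubmonoid.subset_closure (Or.inr ⟨⟨j, T⟩, rfl⟩)

theorem sq_smul_mem_matQuadModule (a : MvPolynomial σ ℝ) {G : Matrix ι ι (MvPolynomial σ ℝ)}
    (hG : G ∈ matQuadModule ι H) : a ^ 2 • G ∈ matQuadModule ι H := by
  induction hG using AddSubmonoid.closure_induction with
  | mem G hG =>
    rcases hG with ⟨v, rfl⟩ | ⟨⟨j, T⟩, rfl⟩
    · convert vecMulVec_self_mem_matQuadModule (a • v) using 1
      simp only [smul_vecMulVec, vecMulVec_smul, smul_smul, sq]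
    · convert transpose_mul_mul_mem_matQuadModule j (a • T) using 1
      simp only [transpose_smul, Matrix.smul_mul, Matrix.mul_smul, smul_smul, sq]
  | zero => simp
  | add x y _ _ hx hy => rw [smul_add]; exact add_mem hx hy

theorem real_smul_mem_matQuadModule {c : ℝ} (hc : 0 ≤ c) {G : Matrix ι ι (MvPolynomial σ ℝ)}
    (hG : G ∈ matQuadModule ι H) : c • G ∈ matQuadModule ι H := by
  convert sq_smul_mem_matQuadModule (C (√c)) hG using 1
  rw [← C_pow, Real.sq_sqrt hc]
  ext1 i j
  simp [smul_eq_C_mul]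

theorem transpose_eq_of_mem_matQuadModule (hH : ∀ j, (H j).IsSymm)
    {G : Matrix ι ι (MvPolynomial σ ℝ)} (hG : G ∈ matQuadModule ι H) : Gᵀ = G := by
  induction hG using AddSubmonoid.closure_induction with
  | mem G hG =>
    rcases hG with ⟨v, rfl⟩ | ⟨⟨j, T⟩, rfl⟩
    · exact transpose_vecMulVec v v
    · simp only [transpose_mul, transpose_transpose, (hH j).eq, Matrix.mul_assoc]
  | zero => simp
  | add x y _ _ hx hy => rw [transpose_add, hx, hy]

/-- The matrices whose symmetric part lies in the quadratic module. -/
noncomputable def symPartCone (ι : Type*) (H : ∀ j, Matrix (ρ j) (ρ j) (MvPolynomial σ ℝ)) :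
    PointedCone ℝ (Matrix ι ι (MvPolynomial σ ℝ)) where
  carrier := {G | G + Gᵀ ∈ matQuadModule ι H}
  zero_mem' := by simp
  add_mem' {x y} hx hy := by
    have := (matQuadModule ι H).add_mem hx hy
    rw [Set.mem_ofPred_eq, transpose_add]
    convert this using 1
    abel
  smul_mem' c x hx := by
    have : (c : ℝ) • x + ((c : ℝ) • x)ᵀ ∈ matQuadModule ι H := by
      rw [transpose_smul, ← smul_add]
      exact real_smul_mem_matQuadModule c.2 hx
    exact this

theorem mem_symPartCone {G : Matrix ι ι (MvPolynomial σ ℝ)} :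
    G ∈ symPartCone ι H ↔ G + Gᵀ ∈ matQuadModule ι H :=
  Iff.rfl

theorem mem_symPartCone_of_mem (hH : ∀ j, (H j).IsSymm) {G : Matrix ι ι (MvPolynomial σ ℝ)}
    (hG : G ∈ matQuadModule ι H) : G ∈ symPartCone ι H := by
  rw [mem_symPartCone, transpose_eq_of_mem_matQuadModule hH hG]
  exact add_mem hG hG

theorem mem_matQuadModule_of_isSymm {G : Matrix ι ι (MvPolynomial σ ℝ)} (hGs : G.IsSymm)
    (hG : G ∈ symPartCone ι H) : G ∈ matQuadModule ι H := by
  rw [mem_symPartCone, hGs.eq] at hG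
  convert real_smul_mem_matQuadModule (c := 2⁻¹) (by norm_num) hG using 1
  module

theorem sq_smul_mem_symPartCone (a : MvPolynomial σ ℝ) {G : Matrix ι ι (MvPolynomial σ ℝ)}
    (hG : G ∈ symPartCone ι H) : a ^ 2 • G ∈ symPartCone ι H := by
  rw [mem_symPartCone, transpose_smul, ← smul_add]
  exact sq_smul_mem_matQuadModule a hG

/-- The polynomials `q` such that `q • v vᵀ` lies in the matrix quadratic module for all `v`. -/
noncomputable def scalarPart (ι : Type*) (H : ∀ j, Matrix (ρ j) (ρ j) (MvPolynomial σ ℝ)) :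
    AddSubmonoid (MvPolynomial σ ℝ) where
  carrier := {q | ∀ v : ι → MvPolynomial σ ℝ, q • vecMulVec v v ∈ matQuadModule ι H}
  zero_mem' v := by simp
  add_mem' hx hy v := by rw [add_smul]; exact add_mem (hx v) (hy v)

theorem sq_mul_mem_scalarPart (a : MvPolynomial σ ℝ) {q : MvPolynomial σ ℝ}
    (hq : q ∈ scalarPart ι H) : a ^ 2 * q ∈ scalarPart ι H := fun v => by
  rw [mul_smul]; exact sq_smul_mem_matQuadModule a (hq v)

theorem sq_mem_scalarPart (a : MvPolynomial σ ℝ) : a ^ 2 ∈ scalarPart ι H := fun v =>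
  sq_smul_mem_matQuadModule a (vecMulVec_self_mem_matQuadModule v)

theorem trace_mem_scalarPart {j : κ} {S : Matrix (ρ j) (ρ j) (MvPolynomial σ ℝ)}
    (hS : IsSOSMatrix S) : trace (Sᵀ * H j) ∈ scalarPart ι H := by
  obtain ⟨l, T, rfl⟩ := hS
  have e : trace ((Tᵀ * T)ᵀ * H j) = ∑ i, T.row i ⬝ᵥ (H j *ᵥ T.row i) := by
    rw [transpose_mul, transpose_transpose, Matrix.mul_assoc, trace_mul_comm, trace]
    refine Finset.sum_congr rfl fun i _ => ?_
    rw [diag_apply, Matrix.mul_assoc, Matrix.mul_apply_eq_vecMul, vecMul, dotProduct]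
    rfl
  rw [e]
  refine sum_mem fun i _ v => ?_
  convert transpose_mul_mul_mem_matQuadModule j (vecMulVec (T.row i) v) using 1
  rw [vecMulVec_transpose_mul_mul]

/-- Every polynomial is bounded with respect to an Archimedean quadratic module. -/
theorem exists_C_sub_sq_mem_scalarPart [Fintype σ] {c : ℝ}
    (hc : C c - ∑ i, X i ^ 2 ∈ scalarPart ι H) (a : MvPolynomial σ ℝ) :
    ∃ k : ℝ, C (k ^ 2) - a ^ 2 ∈ scalarPart ι H := by
  classical
  induction a using MvPolynomial.induction_on with
  | C r => exact ⟨r, by simp⟩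
  | add a b ha hb =>
    obtain ⟨k, hk⟩ := ha
    obtain ⟨l, hl⟩ := hb
    refine ⟨√(2 * k ^ 2 + 2 * l ^ 2), ?_⟩
    rw [Real.sq_sqrt (by positivity)]
    convert add_mem (add_mem (add_mem hk hk) (add_mem hl hl)) (sq_mem_scalarPart (a - b)) using 1
    simp only [map_add, map_mul, map_pow, map_ofNat]
    ring
  | mul_X a i ha =>
    obtain ⟨k, hk⟩ := ha
    have hX : C (√(|c|) ^ 2) - X i ^ 2 ∈ scalarPart ι H := by
      rw [Real.sq_sqrt (abs_nonneg c)]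
      have h1 : C (√(|c| - c)) ^ 2 ∈ scalarPart ι H := sq_mem_scalarPart _
      have h2 : ∑ m ∈ univ.erase i, (X m : MvPolynomial σ ℝ) ^ 2 ∈ scalarPart ι H :=
        sum_mem fun m _ => sq_mem_scalarPart _
      convert add_mem (add_mem hc h1) h2 using 1
      rw [← C_pow, Real.sq_sqrt (sub_nonneg.2 (le_abs_self c)),
        ← Finset.add_sum_erase _ _ (Finset.mem_univ i), map_sub]
      ring
    refine ⟨√(|c|) * k, ?_⟩
    convert add_mem (sq_mul_mem_scalarPart (C √(|c|)) hk) (sq_mul_mem_scalarPart a hX) using 1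
    simp only [map_mul, map_pow]
    ring

variable [Fintype ι] [DecidableEq ι]

theorem one_sub_single_mem_matQuadModule (i : ι) :
    1 - single i i 1 ∈ matQuadModule ι H := by
  have h : ∑ m ∈ univ.erase i, vecMulVec (Pi.single m 1) (Pi.single m 1)
      ∈ matQuadModule ι H := sum_mem fun m _ => vecMulVec_self_mem_matQuadModule _
  convert h using 1
  have h1 : (1 : Matrix ι ι (MvPolynomial σ ℝ)) = ∑ m, single m m 1 := by
    rw [sum_single_one]
  rw [h1, ← Finset.add_sum_erase _ _ (Finset.mem_univ i), add_sub_cancel_left]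
  simp [single_eq_single_vecMulVec_single]

theorem one_mem_matQuadModule : 1 ∈ matQuadModule ι H := by
  rw [← sum_single_one]
  refine sum_mem fun m _ => ?_
  rw [single_eq_single_vecMulVec_single]
  exact vecMulVec_self_mem_matQuadModule _

/-- The identity is an order unit of an Archimedean quadratic module. -/
theorem exists_smul_one_add_mem [Fintype σ] {c : ℝ}
    (hc : C c - ∑ i, X i ^ 2 ∈ scalarPart ι H) (G : Matrix ι ι (MvPolynomial σ ℝ)) :
    ∃ N : ℝ, N • 1 + G ∈ symPartCone ι H := by
  induction G using Matrix.induction_on' with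
  | h_zero => exact ⟨0, by simp⟩
  | h_add x y hx hy =>
    obtain ⟨N, hN⟩ := hx
    obtain ⟨N', hN'⟩ := hy
    refine ⟨N + N', ?_⟩
    convert add_mem hN hN' using 1
    module
  | h_std_basis i j a =>
    obtain ⟨k, hk⟩ := exists_C_sub_sq_mem_scalarPart hc a
    refine ⟨(1 + k ^ 2) / 2, ?_⟩
    rw [mem_symPartCone]
    have h1 := vecMulVec_self_mem_matQuadModule (H := H) (Pi.single i 1 + Pi.single j a)
    have h2 := hk (Pi.single j 1)
    have h3 := one_sub_single_mem_matQuadModule (H := H) i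
    have h4 := real_smul_mem_matQuadModule (sq_nonneg k)
      (one_sub_single_mem_matQuadModule (H := H) j)
    convert add_mem (add_mem (add_mem h1 h2) h3) h4 using 1
    have e1 : (((1 + k ^ 2) / 2 : ℝ) • (1 : Matrix ι ι (MvPolynomial σ ℝ)) + single i j a)
        + (((1 + k ^ 2) / 2 : ℝ) • (1 : Matrix ι ι (MvPolynomial σ ℝ)) + single i j a)ᵀ
        = (1 + k ^ 2) • (1 : Matrix ι ι (MvPolynomial σ ℝ)) + single i j a + single j i a := by
      simp only [transpose_add, transpose_smul, transpose_one, transpose_single]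
      module
    have e2 : ∀ (l m : ι) (b : MvPolynomial σ ℝ), single l m b
        = b • vecMulVec (Pi.single l 1) (Pi.single m 1) := by
      intro l m b
      rw [← single_eq_single_vecMulVec_single, smul_single, smul_eq_mul, mul_one]
    have e3 : (Pi.single j a : ι → MvPolynomial σ ℝ) = a • Pi.single j 1 := by
      rw [← Pi.single_smul, smul_eq_mul, mul_one]
    rw [e1, e3]
    simp only [e2]
    ext1 x y
    simp only [Matrix.add_apply, Matrix.sub_apply, Matrix.smul_apply, vecMulVec_apply,
      Pi.add_apply, Pi.smul_apply, smul_eq_mul, smul_eq_C_mul, map_add, map_pow, map_one]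
    ring

end QuadraticModule

section Representation

variable {σ ι κ : Type*} [Fintype ι]

theorem IsSOSMatrix.zero : IsSOSMatrix (0 : Matrix ι ι (MvPolynomial σ ℝ)) :=
  ⟨0, 0, by simp⟩

theorem IsSOSMatrix.vecMulVec_self (v : ι → MvPolynomial σ ℝ) : IsSOSMatrix (vecMulVec v v) :=
  ⟨1, Matrix.of fun _ => v, by ext1 i j; simp [vecMulVec_apply, Matrix.mul_apply]⟩

theorem IsSOSMatrix.add {A B : Matrix ι ι (MvPolynomial σ ℝ)} (hA : IsSOSMatrix A)
    (hB : IsSOSMatrix B) : IsSOSMatrix (A + B) := by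
  obtain ⟨l, S, rfl⟩ := hA
  obtain ⟨m, T, rfl⟩ := hB
  refine ⟨l + m, Matrix.of (Fin.addCases (fun i => S.row i) fun i => T.row i), ?_⟩
  ext1 i j
  simp [Matrix.mul_apply, Fin.sum_univ_add]

theorem lram_add {R ιp ιq : Type*} [CommSemiring R] [Fintype ιq]
    (A A' : Matrix (ιp × ιq) (ιp × ιq) R) (B : Matrix ιq ιq R) :
    lram (A + A') B = lram A B + lram A' B := by
  ext1 i j
  simp [lram, add_mul, Finset.sum_add_distrib]

theorem lram_zero {R ιp ιq : Type*} [CommSemiring R] [Fintype ιq] (B : Matrix ιq ιq R) :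
    lram (0 : Matrix (ιp × ιq) (ιp × ιq) R) B = 0 := by
  ext1 i j
  simp [lram]

theorem lram_vecMulVec {R ιp ιq : Type*} [CommSemiring R] [Fintype ιq] (T : Matrix ιq ιp R)
    {B : Matrix ιq ιq R} (hB : B.IsSymm) :
    lram (vecMulVec (fun a => T a.2 a.1) fun a => T a.2 a.1) B = Tᵀ * B * T := by
  ext1 i j
  simp only [lram, of_apply, vecMulVec_apply, Matrix.mul_apply, transpose_apply, Finset.sum_mul]
  rw [Finset.sum_comm]
  refine Finset.sum_congr rfl fun a _ => Finset.sum_congr rfl fun b _ => ?_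
  rw [← hB.apply a b]
  ring

/-- Elements of the matrix quadratic module have a weighted SOS representation. -/
theorem exists_sos_of_mem_matQuadModule [Fintype κ] {ρ : κ → Type*} [∀ j, Fintype (ρ j)]
    {H : ∀ j, Matrix (ρ j) (ρ j) (MvPolynomial σ ℝ)} (hH : ∀ j, (H j).IsSymm)
    {G : Matrix ι ι (MvPolynomial σ ℝ)} (hG : G ∈ matQuadModule ι H) :
    ∃ (S0 : Matrix ι ι (MvPolynomial σ ℝ))
      (Sg : ∀ j, Matrix (ι × ρ j) (ι × ρ j) (MvPolynomial σ ℝ)),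
      IsSOSMatrix S0 ∧ (∀ j, IsSOSMatrix (Sg j)) ∧ G = S0 + ∑ j, lram (Sg j) (H j) := by
  classical
  induction hG using AddSubmonoid.closure_induction with
  | mem G hG =>
    rcases hG with ⟨v, rfl⟩ | ⟨⟨j, T⟩, rfl⟩
    · exact ⟨_, 0, .vecMulVec_self v, fun j => .zero, by simp [lram_zero]⟩
    · refine ⟨0, Pi.single j (vecMulVec (fun a => T a.2 a.1) fun a => T a.2 a.1), .zero, ?_, ?_⟩
      · intro i
        by_cases h : i = j
        · subst h
          rw [Pi.single_eq_same]
          exact .vecMulVec_self _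
        · rw [Pi.single_eq_of_ne h]
          exact .zero
      · rw [Finset.sum_eq_single j, Pi.single_eq_same, lram_vecMulVec T (hH j), zero_add]
        · intro i _ h
          rw [Pi.single_eq_of_ne h, lram_zero]
        · simp
  | zero => exact ⟨0, 0, .zero, fun j => .zero, by simp [lram_zero]⟩
  | add x y _ _ hx hy =>
    obtain ⟨S0, Sg, h0, hg, rfl⟩ := hx
    obtain ⟨T0, Tg, k0, kg, rfl⟩ := hy
    refine ⟨S0 + T0, Sg + Tg, h0.add k0, fun j => (hg j).add (kg j), ?_⟩
    simp only [Pi.add_apply, lram_add, Finset.sum_add_distrib]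
    abel

end Representation

/-- A functional positive on rank one matrices and normalised at `1` is positive on positive
definite matrices. -/
theorem Matrix.PosDef.functional_pos {ι : Type*} [Fintype ι] [DecidableEq ι]
    {A : Matrix ι ι ℝ} (hA : A.PosDef) {l : Matrix ι ι ℝ →ₗ[ℝ] ℝ}
    (hl : ∀ v, 0 ≤ l (vecMulVec v v)) (hl1 : l 1 = 1) : 0 < l A := by
  set U : Matrix ι ι ℝ := (hA.1.eigenvectorUnitary).1
  have hdecomp : ∀ d : ι → ℝ, U * diagonal d * Uᵀ
      = ∑ m, d m • vecMulVec (fun i => U i m) (fun i => U i m) := by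
    intro d
    ext1 i j
    rw [Matrix.mul_apply]
    simp only [mul_diagonal, transpose_apply, Matrix.sum_apply, Matrix.smul_apply,
      vecMulVec_apply, smul_eq_mul]
    exact Finset.sum_congr rfl fun m _ => by ring
  have hAd : A = ∑ m, hA.1.eigenvalues m • vecMulVec (fun i => U i m) (fun i => U i m) := by
    rw [← hdecomp]
    conv_lhs => rw [hA.1.spectral_theorem, Unitary.conjStarAlgAut_apply]
    rfl
  have h1d : (1 : Matrix ι ι ℝ) = ∑ m, vecMulVec (fun i => U i m) (fun i => U i m) := by
    have := hdecomp 1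
    simp only [Pi.one_apply, one_smul] at this
    rw [← this, Pi.one_def, diagonal_one, Matrix.mul_one]
    exact (Unitary.mul_star_self_of_mem hA.1.eigenvectorUnitary.2).symm
  have hsum : ∑ m, l (vecMulVec (fun i => U i m) (fun i => U i m)) = 1 := by
    rw [← map_sum, ← h1d, hl1]
  rw [hAd, map_sum]
  simp only [map_smul, smul_eq_mul]
  have hnn : ∀ m, 0 ≤ hA.1.eigenvalues m * l (vecMulVec (fun i => U i m) (fun i => U i m)) :=
    fun m => mul_nonneg (hA.eigenvalues_pos m).le (hl _)
  refine (Finset.sum_nonneg fun m _ => hnn m).lt_of_ne fun h => ?_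
  have h0 := (Finset.sum_eq_zero_iff_of_nonneg fun m _ => hnn m).1 h.symm
  rw [Finset.sum_eq_zero fun m hm =>
    (mul_eq_zero.1 (h0 m hm)).resolve_left (hA.eigenvalues_pos m).ne'] at hsum
  exact zero_ne_one hsum

/-- A linear functional on polynomial matrices that is multiplicative along a character factors
through evaluation at a point. -/
theorem exists_point_of_character {σ ι : Type*} [Fintype ι] [DecidableEq ι]
    {L : Matrix ι ι (MvPolynomial σ ℝ) →ₗ[ℝ] ℝ} {φ : MvPolynomial σ ℝ →ₐ[ℝ] ℝ}
    (hL : ∀ a v, L (a • v) = φ a * L v) :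
    ∃ (x : σ → ℝ) (l : Matrix ι ι ℝ →ₗ[ℝ] ℝ), (∀ G, L G = l (evalMat x G)) ∧
      ∀ A, l A = L (A.map C) := by
  set x : σ → ℝ := fun i => φ (X i)
  have hφ : ∀ q, φ q = eval x q := by
    intro q
    have : φ = aeval x := MvPolynomial.algHom_ext fun i => by simp [x]
    rw [this, aeval_eq_eval]
  refine ⟨x, L ∘ₗ (Algebra.linearMap ℝ (MvPolynomial σ ℝ)).mapMatrix, fun G => ?_, fun A => rfl⟩
  induction G using Matrix.induction_on' with
  | h_zero => simp [evalMat]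
  | h_add p q hp hq =>
    have : evalMat x (p + q) = evalMat x p + evalMat x q := by ext1 i j; simp [evalMat]
    rw [this, map_add, map_add, hp, hq]
  | h_std_basis i j a =>
    have e1 : single i j a = a • single i j (1 : MvPolynomial σ ℝ) := by simp [smul_single]
    have e2 : (evalMat x (single i j a)).map C
        = (C (eval x a) : MvPolynomial σ ℝ) • single i j (1 : MvPolynomial σ ℝ) := by
      ext1 k l
      simp only [evalMat, map_apply, Matrix.smul_apply, single_apply]
      split_ifs <;> simp
    change L _ = L ((evalMat x (single i j a)).map C)
    rw [e2, e1, hL, hL, hφ, hφ, eval_C]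

/-- multi-constraint Scherer–Hol Positivstellensatz. -/
theorem scherer_hol_multi {n p t : ℕ} (r : Fin t → ℕ)
    (H : ∀ j, Matrix (Fin (r j)) (Fin (r j)) (MvPolynomial (Fin n) ℝ))
    (hHs : ∀ j, (H j).IsSymm)
    (hK : IsCompact {x : Fin n → ℝ | ∀ j, (evalMat x (H j)).PosSemidef})
    (harch : ∃ C > (0 : ℝ), ∃ σ₀ : MvPolynomial (Fin n) ℝ, IsSOSPoly σ₀ ∧
      ∃ Sg : ∀ j, Matrix (Fin (r j)) (Fin (r j)) (MvPolynomial (Fin n) ℝ),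
        (∀ j, IsSOSMatrix (Sg j)) ∧
        MvPolynomial.C C - ∑ i, (X i : MvPolynomial (Fin n) ℝ) ^ 2 =
          σ₀ + ∑ j, Matrix.trace ((Sg j)ᵀ * H j))
    (F : Matrix (Fin p) (Fin p) (MvPolynomial (Fin n) ℝ)) (hFs : F.IsSymm)
    (hpd : ∀ x : Fin n → ℝ,
      (∀ j, (evalMat x (H j)).PosSemidef) → (evalMat x F).PosDef) :
    ∃ (S0 : Matrix (Fin p) (Fin p) (MvPolynomial (Fin n) ℝ))
      (Sg : ∀ j, Matrix (Fin p × Fin (r j)) (Fin p × Fin (r j)) (MvPolynomial (Fin n) ℝ)),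
      IsSOSMatrix S0 ∧ (∀ j, IsSOSMatrix (Sg j)) ∧
      F = S0 + ∑ j, lram (Sg j) (H j) := by
  obtain ⟨c, -, σ₀, ⟨l₀, g₀, rfl⟩, S, hS, hcS⟩ := harch
  have hc : C c - ∑ i, X i ^ 2 ∈ scalarPart (Fin p) H := by
    rw [hcS]
    exact add_mem (sum_mem fun i _ => sq_mem_scalarPart _)
      (sum_mem fun j _ => trace_mem_scalarPart (hS j))
  refine exists_sos_of_mem_matQuadModule hHs (mem_matQuadModule_of_isSymm hFs ?_)
  by_contra hF
  obtain ⟨L, φ, hLM, hL1, hLF, hLφ⟩ := exists_character_state (exists_smul_one_add_mem hc)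
    (mem_symPartCone_of_mem hHs one_mem_matQuadModule)
    (fun a m hm => sq_smul_mem_symPartCone a hm) hF
  obtain ⟨x, l, hLl, hlL⟩ := exists_point_of_character hLφ
  have hLQ : ∀ G ∈ matQuadModule (Fin p) H, 0 ≤ L G := fun G hG =>
    hLM G (mem_symPartCone_of_mem hHs hG)
  have hl1 : l 1 = 1 := by
    rw [hlL, Matrix.map_one _ C_0 C_1, hL1]
  have hlv : ∀ v, 0 ≤ l (vecMulVec v v) := fun v => by
    rw [hlL]
    convert hLQ _ (vecMulVec_self_mem_matQuadModule fun i => C (v i)) using 2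
    ext1 i j
    simp [vecMulVec_apply]
  obtain ⟨i, hi⟩ : ∃ i, 0 < l (single i i 1) := by
    by_contra! h
    rw [← sum_single_one, map_sum] at hl1
    linarith [Finset.sum_nonpos fun i (_ : i ∈ univ) => h i]
  have hx : ∀ j, (evalMat x (H j)).PosSemidef := by
    intro j
    refine .of_dotProduct_mulVec_nonneg ?_ fun y => ?_
    · exact (hHs j).map (eval x)
    · have h := hLQ _ (transpose_mul_mul_mem_matQuadModule j
        (vecMulVec (fun a => C (y a)) (Pi.single i 1)))
      rw [vecMulVec_transpose_mul_mul] at h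
      have e : evalMat x (((fun a => C (y a)) ⬝ᵥ (H j *ᵥ fun a => C (y a)))
          • vecMulVec (Pi.single i 1) (Pi.single i 1) : Matrix (Fin p) (Fin p) _)
          = (star y ⬝ᵥ (evalMat x (H j) *ᵥ y)) • single i i (1 : ℝ) := by
        ext1 k m
        simp [evalMat, single_eq_single_vecMulVec_single, vecMulVec_apply, dotProduct, mulVec,
          Pi.single_apply, apply_ite (eval x)]
      rw [hLl, e, map_smul, smul_eq_mul] at h
      exact nonneg_of_mul_nonneg_left h hi
  have := (hpd x hx).functional_pos hlv hl1
  rw [← hLl] at this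
  linarith
end

section
/- Suppose Y is compact and F(x) ∈ S[x]^p is positive definite on X̂ = {x : G_j(x,y) ⪰ 0 ∀ j ∈ [s], y ∈ Y}. Then for every C > 0 there exist M > 0 and k̄ ∈ ℕ such that for all k ≥ k̄ and all x ∈ [−C,C]ⁿ, F(x) − Σ_{j=1}^s ∫_Y ⟨I_p ⊗ (I_{q_j} − G_j(x,y)/M)^{2k}, G_j(x,y)⟩_p dν(y) ≻ 0. -/
open MeasureTheory MvPolynomial Matrix Finset

/-- For `0 ≤ t ≤ 1`, `t (1 - t) ^ N ≤ 1 / (N + 1)`. -/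
lemma mul_one_sub_pow_le {t : ℝ} (ht0 : 0 ≤ t) (ht1 : t ≤ 1) (N : ℕ) :
    t * (1 - t) ^ N ≤ 1 / (N + 1) := by
  have hpow : 0 ≤ (1 - t) ^ N := pow_nonneg (by linarith) N
  have hbern : 1 + (N : ℝ) * t ≤ (1 + t) ^ N := one_add_mul_le_pow (by linarith) N
  have hprod : (1 - t) ^ N * (1 + t) ^ N ≤ 1 := by
    rw [← mul_pow]
    exact pow_le_one₀ (by nlinarith) (by nlinarith)
  rw [le_div_iff₀ (by positivity)]
  calc t * (1 - t) ^ N * (N + 1) = (1 - t) ^ N * (N * t + t) := by ring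
    _ ≤ (1 - t) ^ N * (1 + t) ^ N := by gcongr; linarith
    _ ≤ 1 := hprod

/-- The scalar penalty is uniformly small from above for `l ≤ M`. -/
lemma penalty_le {M l : ℝ} (hM : 0 < M) (hl : l ≤ M) (k : ℕ) :
    (1 - M⁻¹ * l) ^ (2 * k) * l ≤ M / (2 * k + 1) := by
  rcases le_total 0 l with h | h
  · have hpt := mul_one_sub_pow_le (t := M⁻¹ * l) (by positivity)
      (by rw [inv_mul_le_iff₀ hM]; linarith) (2 * k)
    calc (1 - M⁻¹ * l) ^ (2 * k) * l
        = M * (M⁻¹ * l * (1 - M⁻¹ * l) ^ (2 * k)) := by field_simp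
      _ ≤ M * (1 / ((2 * k : ℕ) + 1)) := by gcongr
      _ = M / (2 * k + 1) := by push_cast; ring
  · calc (1 - M⁻¹ * l) ^ (2 * k) * l ≤ 0 :=
          mul_nonpos_of_nonneg_of_nonpos ((even_two_mul k).pow_nonneg _) h
      _ ≤ M / (2 * k + 1) := by positivity

/-- The scalar penalty diverges to `-∞` linearly in `k` away from the nonnegative axis. -/
lemma penalty_le_of_neg {M l δ : ℝ} (hM : 0 < M) (hδ : 0 < δ) (hl : l ≤ -δ) (k : ℕ) :
    (1 - M⁻¹ * l) ^ (2 * k) * l ≤ -(2 * k * (δ ^ 2 / M)) := by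
  have hMi : 0 < M⁻¹ := inv_pos.2 hM
  have hbern := one_add_mul_le_pow (a := -(M⁻¹ * l)) (by nlinarith) (2 * k)
  push_cast at hbern
  rw [← sub_eq_add_neg] at hbern
  have hsq : δ ^ 2 ≤ l ^ 2 := by nlinarith
  have hmul : (k : ℝ) * M⁻¹ * δ ^ 2 ≤ k * M⁻¹ * l ^ 2 := by gcongr
  rw [div_eq_mul_inv]
  nlinarith [mul_le_mul_of_nonpos_right hbern (by linarith : l ≤ 0)]

section Trace

variable {ι : Type*} [Fintype ι] [DecidableEq ι] {A : Matrix ι ι ℝ}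

lemma trace_conjStarAlgAut (U : unitary (Matrix ι ι ℝ)) (B : Matrix ι ι ℝ) :
    (Unitary.conjStarAlgAut ℝ _ U B).trace = B.trace := by
  rw [Unitary.conjStarAlgAut_apply, Matrix.trace_mul_cycle]
  simp

lemma Matrix.IsHermitian.trace_mul_self_eq (hA : A.IsHermitian) :
    (A * A).trace = ∑ i, hA.eigenvalues i ^ 2 := by
  conv_lhs => rw [hA.spectral_theorem, ← map_mul, trace_conjStarAlgAut]
  simp [Matrix.diagonal_mul_diagonal, Matrix.trace_diagonal, sq]

lemma Matrix.IsHermitian.trace_penalty_eq (hA : A.IsHermitian) (M : ℝ) (k : ℕ) :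
    ((1 - M⁻¹ • A) ^ (2 * k) * A).trace =
      ∑ i, (1 - M⁻¹ * hA.eigenvalues i) ^ (2 * k) * hA.eigenvalues i := by
  have hdiag : (1 : Matrix ι ι ℝ) - M⁻¹ • diagonal (RCLike.ofReal ∘ hA.eigenvalues) =
      diagonal (fun i => 1 - M⁻¹ * hA.eigenvalues i) := by
    rw [← Matrix.diagonal_one, ← Matrix.diagonal_smul, Matrix.diagonal_sub]
    rfl
  have hconj : (1 - M⁻¹ • A) ^ (2 * k) * A =
      Unitary.conjStarAlgAut ℝ _ hA.eigenvectorUnitary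
        ((1 - M⁻¹ • diagonal (RCLike.ofReal ∘ hA.eigenvalues)) ^ (2 * k) *
          diagonal (RCLike.ofReal ∘ hA.eigenvalues)) := by
    rw [map_mul, map_pow, map_sub, map_one, map_smul, ← hA.spectral_theorem]
  rw [hconj, trace_conjStarAlgAut, hdiag, Matrix.diagonal_pow, Matrix.diagonal_mul_diagonal,
    Matrix.trace_diagonal]
  rfl

lemma Matrix.IsHermitian.eigenvalues_le_of_trace (hA : A.IsHermitian) {M : ℝ}
    (hM : (A * A).trace + 1 ≤ M) (i : ι) : hA.eigenvalues i ≤ M := by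
  rw [hA.trace_mul_self_eq] at hM
  have := Finset.single_le_sum (f := fun i => hA.eigenvalues i ^ 2) (fun _ _ => sq_nonneg _)
    (Finset.mem_univ i)
  nlinarith [sq_nonneg (hA.eigenvalues i - 1)]

lemma Matrix.IsHermitian.trace_penalty_le (hA : A.IsHermitian) {M : ℝ} (hM0 : 0 < M)
    (hM : (A * A).trace + 1 ≤ M) (k : ℕ) :
    ((1 - M⁻¹ • A) ^ (2 * k) * A).trace ≤ Fintype.card ι * (M / (2 * k + 1)) := by
  rw [hA.trace_penalty_eq]
  refine (Finset.sum_le_card_nsmul _ _ _ fun i _ =>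
    penalty_le hM0 (hA.eigenvalues_le_of_trace hM i) k).trans_eq ?_
  simp [nsmul_eq_mul]

lemma Matrix.IsHermitian.exists_eigenvalue_le (hA : A.IsHermitian) {δ : ℝ} {v : ι → ℝ}
    (hv : v ⬝ᵥ A *ᵥ v + δ * (v ⬝ᵥ v) < 0) : ∃ i, hA.eigenvalues i ≤ -δ := by
  by_contra! h
  have hpsd : (Unitary.conjStarAlgAut ℝ _ hA.eigenvectorUnitary
      (diagonal (fun i => hA.eigenvalues i + δ))).PosSemidef := by
    rw [Unitary.conjStarAlgAut_apply]
    exact (Matrix.PosSemidef.diagonal (fun i => by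
      have := h i; simp only [Pi.zero_apply]; linarith)).mul_mul_conjTranspose_same _
  have heq : Unitary.conjStarAlgAut ℝ _ hA.eigenvectorUnitary
      (diagonal (fun i => hA.eigenvalues i + δ)) = A + δ • 1 := by
    have : diagonal (fun i => hA.eigenvalues i + δ) =
        diagonal (RCLike.ofReal ∘ hA.eigenvalues) + δ • (1 : Matrix ι ι ℝ) := by
      rw [← Matrix.diagonal_one, ← Matrix.diagonal_smul, Matrix.diagonal_add]
      simp
    rw [this, map_add, map_smul, map_one, ← hA.spectral_theorem]
  rw [heq] at hpsd
  have := hpsd.dotProduct_mulVec_nonneg v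
  simp only [star_trivial, Matrix.add_mulVec, Matrix.smul_mulVec, Matrix.one_mulVec,
    dotProduct_add, dotProduct_smul, smul_eq_mul] at this
  linarith

lemma Matrix.IsHermitian.trace_penalty_le_of_neg (hA : A.IsHermitian) {M δ : ℝ} (hM0 : 0 < M)
    (hM : (A * A).trace + 1 ≤ M) (hδ : 0 < δ) {v : ι → ℝ}
    (hv : v ⬝ᵥ A *ᵥ v + δ * (v ⬝ᵥ v) < 0) (k : ℕ) :
    ((1 - M⁻¹ • A) ^ (2 * k) * A).trace ≤
      Fintype.card ι * (M / (2 * k + 1)) - 2 * k * (δ ^ 2 / M) := by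
  obtain ⟨i, hi⟩ := hA.exists_eigenvalue_le hv
  have hneg := penalty_le_of_neg hM0 hδ hi k
  have hsum : ∑ j ∈ Finset.univ.erase i,
      (1 - M⁻¹ * hA.eigenvalues j) ^ (2 * k) * hA.eigenvalues j ≤
        Fintype.card ι * (M / (2 * k + 1)) := by
    calc _ ≤ ∑ j ∈ Finset.univ.erase i, M / (2 * k + 1) := Finset.sum_le_sum fun j _ =>
            penalty_le hM0 (hA.eigenvalues_le_of_trace hM j) k
      _ ≤ ∑ j : ι, M / (2 * k + 1) := Finset.sum_le_sum_of_subset_of_nonneg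
            (Finset.erase_subset _ _) fun _ _ _ => by positivity
      _ = Fintype.card ι * (M / (2 * k + 1)) := by simp
  rw [hA.trace_penalty_eq, ← Finset.add_sum_erase _ _ (Finset.mem_univ i)]
  linarith

end Trace

section PosDef

open Filter Topology

variable {ι : Type*} [Fintype ι]

/-- Positive definiteness is an open condition among Hermitian matrices. -/
lemma Matrix.PosDef.eventually {T : Type*} [TopologicalSpace T] {f : T → Matrix ι ι ℝ}
    (hf : Continuous f) (hH : ∀ t, (f t).IsHermitian) {t₀ : T} (h : (f t₀).PosDef) :
    ∀ᶠ t in 𝓝 t₀, (f t).PosDef := by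
  have hq : Continuous fun z : T × (ι → ℝ) => z.2 ⬝ᵥ f z.1 *ᵥ z.2 := by fun_prop
  have hsph : ∀ᶠ t in 𝓝 t₀, ∀ v ∈ Metric.sphere (0 : ι → ℝ) 1, 0 < v ⬝ᵥ f t *ᵥ v := by
    refine (isCompact_sphere _ _).eventually_forall_of_forall_eventually fun v hv => ?_
    refine hq.continuousAt.eventually (lt_mem_nhds ?_)
    have hv0 : v ≠ 0 := fun h0 => by simp [h0] at hv
    simpa using h.dotProduct_mulVec_pos hv0
  filter_upwards [hsph] with t ht
  refine .of_dotProduct_mulVec_pos (hH t) fun v hv => ?_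
  have hn : 0 < ‖v‖ := norm_pos_iff.2 hv
  have := ht (‖v‖⁻¹ • v) (by simp [norm_smul, hn.ne'])
  simp only [Matrix.mulVec_smul, dotProduct_smul, smul_dotProduct, smul_eq_mul] at this
  rw [star_trivial]
  exact pos_of_mul_pos_right (pos_of_mul_pos_right this (by positivity)) (by positivity)

variable [DecidableEq ι]

lemma isHermitian_sub_smul_one {ι : Type*} [DecidableEq ι] {A : Matrix ι ι ℝ}
    (hA : A.IsHermitian) (c : ℝ) :
    (A - c • (1 : Matrix ι ι ℝ)).IsHermitian :=
  hA.sub (isHermitian_one.smul (IsSelfAdjoint.all c))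

lemma Matrix.PosDef.sub_smul_one_of_le {ι : Type*} [DecidableEq ι] {A : Matrix ι ι ℝ} {b c : ℝ}
    (h : (A - b • (1 : Matrix ι ι ℝ)).PosDef) (hc : c ≤ b) :
    (A - c • (1 : Matrix ι ι ℝ)).PosDef := by
  have : A - c • (1 : Matrix ι ι ℝ) = (A - b • 1) + (b - c) • 1 := by
    rw [sub_smul]; abel
  rw [this]
  exact h.add_posSemidef (PosSemidef.one.smul (by linarith))

lemma Matrix.IsHermitian.exists_posDef_sub_smul_one {A : Matrix ι ι ℝ} (hA : A.IsHermitian) :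
    ∃ b : ℝ, (A - b • (1 : Matrix ι ι ℝ)).PosDef := by
  have hev : ∀ᶠ t : ℝ in 𝓝 0, (1 + t • A).PosDef :=
    Matrix.PosDef.eventually (by fun_prop)
      (fun t => isHermitian_one.add (hA.smul (IsSelfAdjoint.all t))) (by simpa using PosDef.one)
  obtain ⟨t, ht, hpos⟩ :=
    ((hev.filter_mono nhdsWithin_le_nhds).and (self_mem_nhdsWithin (s := Set.Ioi (0 : ℝ)))).exists
  have ht0 : 0 < t := hpos
  refine ⟨-t⁻¹, ?_⟩
  have := ht.smul (inv_pos.2 ht0)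
  rwa [smul_add, smul_smul, inv_mul_cancel₀ ht0.ne', one_smul, add_comm, ← sub_neg_eq_add,
    ← neg_smul] at this

end PosDef

section Integration

variable {n m : ℕ} {ν : Measure (Fin m → ℝ)}

lemma momentsFinite.integrable_eval (hmom : momentsFinite ν) (h : MvPolynomial (Fin m) ℝ) :
    Integrable (fun y => MvPolynomial.eval y h) ν :=
  (integrable_norm_iff (MvPolynomial.continuous_eval h).aestronglyMeasurable).1
    (by simpa only [Real.norm_eq_abs] using hmom h)

lemma momentsFinite.isFiniteMeasure (hmom : momentsFinite ν) : IsFiniteMeasure ν := by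
  have := hmom.integrable_eval 1
  simpa [integrable_const_iff] using this

/-- Substituting `x` for the first block of variables leaves a polynomial in `y`. -/
lemma exists_eval_sumElim (x : Fin n → ℝ) (q : MvPolynomial (Fin n ⊕ Fin m) ℝ) :
    ∃ h : MvPolynomial (Fin m) ℝ, ∀ y, eval (Sum.elim x y) q = eval y h := by
  refine ⟨MvPolynomial.aeval (Sum.elim (fun i => C (x i)) X) q, fun y => ?_⟩
  induction q using MvPolynomial.induction_on with
  | C a => simp
  | add p q hp hq => simp [hp, hq]
  | mul_X p i hp => cases i <;> simp [hp]

lemma momentsFinite.integrable_eval_sumElim (hmom : momentsFinite ν) (x : Fin n → ℝ)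
    (q : MvPolynomial (Fin n ⊕ Fin m) ℝ) :
    Integrable (fun y => eval (Sum.elim x y) q) ν := by
  obtain ⟨h, hh⟩ := exists_eval_sumElim x q
  simpa only [hh] using hmom.integrable_eval h

lemma eval_integY (hmom : momentsFinite ν) (x : Fin n → ℝ)
    (q : MvPolynomial (Fin n ⊕ Fin m) ℝ) :
    eval x (integY ν q) = ∫ y, eval (Sum.elim x y) q ∂ν := by
  have hmon : ∀ (d : (Fin n ⊕ Fin m) →₀ ℕ) (y : Fin m → ℝ),
      eval (Sum.elim x y) (monomial d (q.coeff d)) =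
        (q.coeff d * ∏ i, x i ^ d (Sum.inl i)) * ∏ j, y j ^ d (Sum.inr j) := by
    intro d y
    rw [eval_monomial, Finsupp.prod_fintype _ _ (by simp), Fintype.prod_sum_type]
    simp [mul_assoc]
  conv_rhs => rw [q.as_sum]
  simp only [map_sum]
  rw [integral_finsetSum _ fun d _ => hmom.integrable_eval_sumElim x _, integY, map_sum]
  refine Finset.sum_congr rfl fun d _ => ?_
  simp only [hmon]
  rw [integral_const_mul, eval_monomial, Finsupp.prod_fintype _ _ (by simp)]
  simp only [xPart, Finsupp.comapDomain_apply]
  ring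

end Integration

section Evaluation

variable {n m : ℕ} {ν : Measure (Fin m → ℝ)}

lemma continuous_evalMat {σ ι : Type*} (M : Matrix ι ι (MvPolynomial σ ℝ)) :
    Continuous fun x : σ → ℝ => evalMat x M :=
  continuous_matrix fun i j => MvPolynomial.continuous_eval (M i j)

lemma continuous_evalMat_sumElim {ι : Type*}
    (M : Matrix ι ι (MvPolynomial (Fin n ⊕ Fin m) ℝ)) :
    Continuous fun z : (Fin n → ℝ) × (Fin m → ℝ) => evalMat (Sum.elim z.1 z.2) M :=
  (continuous_evalMat M).comp (continuous_pi fun i => by cases i <;> simp <;> fun_prop)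

lemma isHermitian_evalMat {σ ι : Type*} {M : Matrix ι ι (MvPolynomial σ ℝ)} (hM : M.IsSymm)
    (x : σ → ℝ) : (evalMat x M).IsHermitian := by
  ext i j
  simp [evalMat, hM.apply i j]

lemma eval_trace_penalty {σ ι : Type*} [Fintype ι] [DecidableEq ι]
    (A : Matrix ι ι (MvPolynomial σ ℝ)) (c : ℝ) (k : ℕ) (x : σ → ℝ) :
    eval x ((1 - c • A) ^ k * A).trace =
      ((1 - c • evalMat x A) ^ k * evalMat x A).trace := by
  have h1 : (eval x).mapMatrix (1 - c • A) = 1 - c • evalMat x A := by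
    rw [map_sub, map_one]
    congr 1
    ext i j
    simp [evalMat, smul_eval]
  have h2 : evalMat x A = (eval x).mapMatrix A := rfl
  rw [← h1, h2, ← map_pow, ← map_mul, AddMonoidHom.map_trace]
  rfl

lemma lram_kronecker_one {R ιp ιq : Type*} [CommSemiring R] [Fintype ιq] [DecidableEq ιp]
    (N B : Matrix ιq ιq R) (hB : B.IsSymm) :
    lram (Matrix.kroneckerMap (· * ·) (1 : Matrix ιp ιp R) N) B =
      diagonal fun _ => (N * B).trace := by
  ext i j
  rcases eq_or_ne i j with rfl | hij
  · simp only [lram, of_apply, kroneckerMap_apply, one_apply_eq, one_mul, diagonal_apply_eq,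
      Matrix.trace, diag_apply, Matrix.mul_apply]
    rw [Finset.sum_comm]
    exact Finset.sum_congr rfl fun c _ => Finset.sum_congr rfl fun a _ => by rw [hB.apply]
  · simp [lram, hij, hij.symm]

lemma evalMat_penalized {p s : ℕ} {qd : Fin s → ℕ} (hmom : momentsFinite ν)
    (G : ∀ j, Matrix (Fin (qd j)) (Fin (qd j)) (MvPolynomial (Fin n ⊕ Fin m) ℝ))
    (hGs : ∀ j, (G j).IsSymm)
    (F : Matrix (Fin p) (Fin p) (MvPolynomial (Fin n) ℝ)) (c : ℝ) (k : ℕ) (x : Fin n → ℝ) :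
    evalMat x (F - ∑ j,
        (lram (Matrix.kroneckerMap (· * ·)
            (1 : Matrix (Fin p) (Fin p) (MvPolynomial (Fin n ⊕ Fin m) ℝ))
            (((1 : Matrix (Fin (qd j)) (Fin (qd j)) (MvPolynomial (Fin n ⊕ Fin m) ℝ)) -
              c • G j) ^ k))
          (G j)).map (integY ν)) =
      evalMat x F - (∑ j, ∫ y, ((1 - c • evalMat (Sum.elim x y) (G j)) ^ k *
        evalMat (Sum.elim x y) (G j)).trace ∂ν) • (1 : Matrix (Fin p) (Fin p) ℝ) := by
  ext a b
  simp only [lram_kronecker_one _ _ (hGs _), ← eval_trace_penalty]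
  rcases eq_or_ne a b with rfl | hab
  · simp [evalMat, Matrix.sum_apply, eval_integY hmom]
  · simp [evalMat, Matrix.sum_apply, hab, integY]

end Evaluation

section Penalty

open Filter Topology

variable {n m s : ℕ} {qd : Fin s → ℕ} {Y : Set (Fin m → ℝ)} {ν : Measure (Fin m → ℝ)}
  {G : ∀ j, Matrix (Fin (qd j)) (Fin (qd j)) (MvPolynomial (Fin n ⊕ Fin m) ℝ)}

lemma exists_trace_bound {K : Set (Fin n → ℝ)} (hK : IsCompact K) (hY : IsCompact Y)
    (G : ∀ j, Matrix (Fin (qd j)) (Fin (qd j)) (MvPolynomial (Fin n ⊕ Fin m) ℝ)) :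
    ∃ M > (0 : ℝ), ∀ j, ∀ x ∈ K, ∀ y ∈ Y,
      (evalMat (Sum.elim x y) (G j) * evalMat (Sum.elim x y) (G j)).trace + 1 ≤ M := by
  have hcont : ∀ j, Continuous fun z : (Fin n → ℝ) × (Fin m → ℝ) =>
      (evalMat (Sum.elim z.1 z.2) (G j) * evalMat (Sum.elim z.1 z.2) (G j)).trace + 1 := by
    intro j
    have := continuous_evalMat_sumElim (G j)
    fun_prop
  choose B hB using fun j => ((hK.prod hY).bddAbove_image (hcont j).continuousOn)
  refine ⟨1 + ∑ j, |B j|, by positivity, fun j x hx y hy => ?_⟩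
  have h1 := hB j ⟨(x, y), ⟨hx, hy⟩, rfl⟩
  have h2 := Finset.single_le_sum (f := fun j => |B j|) (fun _ _ => abs_nonneg _)
    (Finset.mem_univ j)
  have h3 := le_abs_self (B j)
  simp only at h1 h2
  linarith

lemma integrable_trace_penalty (hmom : momentsFinite ν) (x : Fin n → ℝ) (c : ℝ) (k : ℕ)
    (j : Fin s) :
    Integrable (fun y => ((1 - c • evalMat (Sum.elim x y) (G j)) ^ k *
        evalMat (Sum.elim x y) (G j)).trace) ν := by
  simpa only [eval_trace_penalty] using
    hmom.integrable_eval_sumElim x ((1 - c • G j) ^ k * G j).trace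

lemma integral_penalty_le [IsFiniteMeasure ν] (hYν : ∀ᵐ y ∂ν, y ∈ Y) (hmom : momentsFinite ν)
    (hGs : ∀ j, (G j).IsSymm) {x : Fin n → ℝ} {M : ℝ} (hM0 : 0 < M) {j : Fin s}
    (hM : ∀ y ∈ Y,
      (evalMat (Sum.elim x y) (G j) * evalMat (Sum.elim x y) (G j)).trace + 1 ≤ M) (k : ℕ) :
    ∫ y, ((1 - M⁻¹ • evalMat (Sum.elim x y) (G j)) ^ (2 * k) *
        evalMat (Sum.elim x y) (G j)).trace ∂ν ≤ ν.real Set.univ * (qd j * (M / (2 * k + 1))) := by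
  calc _ ≤ ∫ _, (qd j * (M / (2 * k + 1)) : ℝ) ∂ν := by
        refine integral_mono_ae (integrable_trace_penalty hmom x _ _ j) (integrable_const _) ?_
        filter_upwards [hYν] with y hy
        simpa using (isHermitian_evalMat (hGs j) (Sum.elim x y)).trace_penalty_le hM0 (hM y hy) k
    _ = _ := by simp

lemma integral_penalty_le_of_neg [IsFiniteMeasure ν] (hYν : ∀ᵐ y ∂ν, y ∈ Y)
    (hmom : momentsFinite ν) (hGs : ∀ j, (G j).IsSymm) {x : Fin n → ℝ} {M : ℝ} (hM0 : 0 < M)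
    {j : Fin s}
    (hM : ∀ y ∈ Y,
      (evalMat (Sum.elim x y) (G j) * evalMat (Sum.elim x y) (G j)).trace + 1 ≤ M)
    {V : Set (Fin m → ℝ)} (hV : MeasurableSet V) {δ : ℝ} (hδ : 0 < δ) {v : Fin (qd j) → ℝ}
    (hv : ∀ y ∈ V, v ⬝ᵥ evalMat (Sum.elim x y) (G j) *ᵥ v + δ * (v ⬝ᵥ v) < 0) (k : ℕ) :
    ∫ y, ((1 - M⁻¹ • evalMat (Sum.elim x y) (G j)) ^ (2 * k) *
        evalMat (Sum.elim x y) (G j)).trace ∂ν ≤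
      ν.real Set.univ * (qd j * (M / (2 * k + 1))) - ν.real V * (2 * k * (δ ^ 2 / M)) := by
  have hind : Integrable (V.indicator fun _ => (2 * k * (δ ^ 2 / M) : ℝ)) ν :=
    (integrable_const _).indicator hV
  calc _ ≤ ∫ y, ((qd j * (M / (2 * k + 1)) : ℝ) -
          V.indicator (fun _ => (2 * k * (δ ^ 2 / M) : ℝ)) y) ∂ν := by
        refine integral_mono_ae (integrable_trace_penalty hmom x _ _ j)
          ((integrable_const _).sub hind) ?_
        filter_upwards [hYν] with y hy
        have hH := isHermitian_evalMat (hGs j) (Sum.elim x y)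
        by_cases hyV : y ∈ V
        · simpa [hyV] using hH.trace_penalty_le_of_neg hM0 (hM y hy) hδ (hv y hyV) k
        · simpa [hyV] using hH.trace_penalty_le hM0 (hM y hy) k
    _ = _ := by
        rw [integral_sub (integrable_const _) hind, integral_indicator_const _ hV]
        simp

lemma tendsto_const_div_two_mul_add_one (c : ℝ) :
    Tendsto (fun k : ℕ => c / (2 * (k : ℝ) + 1)) atTop (𝓝 0) :=
  Tendsto.const_div_atTop (tendsto_atTop_add_const_right _ _
    (tendsto_natCast_atTop_atTop.const_mul_atTop two_pos)) c

/-- A point violating a constraint has a neighbourhood on which the constraint is uniformly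
violated in a fixed direction for a set of parameters `y` of positive measure. -/
lemma exists_neg_direction (hsupp : hasSupport ν Y) (hGs : ∀ j, (G j).IsSymm) {x₀ : Fin n → ℝ}
    {j : Fin s} {y₀ : Fin m → ℝ} (hy₀ : y₀ ∈ Y)
    (hneg : ¬ (evalMat (Sum.elim x₀ y₀) (G j)).PosSemidef) :
    ∃ U ∈ 𝓝 x₀, ∃ V : Set (Fin m → ℝ), IsOpen V ∧ 0 < ν V ∧ ∃ δ > (0 : ℝ),
      ∃ v : Fin (qd j) → ℝ, ∀ x ∈ U, ∀ y ∈ V,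
        v ⬝ᵥ evalMat (Sum.elim x y) (G j) *ᵥ v + δ * (v ⬝ᵥ v) < 0 := by
  have hv : ∃ v, v ⬝ᵥ evalMat (Sum.elim x₀ y₀) (G j) *ᵥ v < 0 := by
    by_contra! h
    exact hneg (.of_dotProduct_mulVec_nonneg (isHermitian_evalMat (hGs j) _)
      fun v => by simpa using h v)
  obtain ⟨v, hv⟩ := hv
  obtain ⟨δ, hδ, hδv⟩ : ∃ δ > (0 : ℝ),
      v ⬝ᵥ evalMat (Sum.elim x₀ y₀) (G j) *ᵥ v + δ * (v ⬝ᵥ v) < 0 := by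
    generalize v ⬝ᵥ evalMat (Sum.elim x₀ y₀) (G j) *ᵥ v = a at hv
    have hvv : 0 ≤ v ⬝ᵥ v := Finset.sum_nonneg fun i _ => mul_self_nonneg (v i)
    refine ⟨-a / (v ⬝ᵥ v + 1), div_pos (by linarith) (by linarith), ?_⟩
    have : a + -a / (v ⬝ᵥ v + 1) * (v ⬝ᵥ v) = a / (v ⬝ᵥ v + 1) := by
      field_simp
      ring
    rw [this]
    exact div_neg_of_neg_of_pos hv (by linarith)
  have hq : Continuous fun z : (Fin n → ℝ) × (Fin m → ℝ) =>
      v ⬝ᵥ evalMat (Sum.elim z.1 z.2) (G j) *ᵥ v + δ * (v ⬝ᵥ v) :=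
    (continuous_const.dotProduct
      ((continuous_evalMat_sumElim (G j)).matrix_mulVec continuous_const)).add continuous_const
  have hopen := isOpen_lt hq continuous_const (g := fun _ => (0 : ℝ))
  obtain ⟨U, W, hUo, hWo, hxU, hyW, hUW⟩ :=
    isOpen_prod_iff.1 hopen x₀ y₀ (by simpa only [Set.mem_ofPred_eq] using hδv)
  have hUWneg : ∀ x ∈ U, ∀ y ∈ W,
      v ⬝ᵥ evalMat (Sum.elim x y) (G j) *ᵥ v + δ * (v ⬝ᵥ v) < 0 := fun x hx y hy => by
    simpa only [Set.mem_ofPred_eq] using hUW (Set.mk_mem_prod hx hy)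
  exact ⟨U, hUo.mem_nhds hxU, W, hWo, hsupp.2 W hWo ⟨y₀, hyW, hy₀⟩, δ, hδ, v,
    hUWneg⟩

/-- Positive definiteness of `F x₀ - b • 1` persists at nearby points, with a larger shift. -/
lemma exists_shift_eventually_posDef {p : ℕ} {F : Matrix (Fin p) (Fin p) (MvPolynomial (Fin n) ℝ)}
    (hFs : F.IsSymm) {x₀ : Fin n → ℝ} {b : ℝ}
    (hb : (evalMat x₀ F - b • (1 : Matrix (Fin p) (Fin p) ℝ)).PosDef) :
    ∃ c > b, ∀ᶠ x in 𝓝 x₀, (evalMat x F - c • (1 : Matrix (Fin p) (Fin p) ℝ)).PosDef := by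
  have hcont : Continuous fun z : (Fin n → ℝ) × ℝ =>
      evalMat z.1 F - z.2 • (1 : Matrix (Fin p) (Fin p) ℝ) :=
    ((continuous_evalMat F).comp continuous_fst).sub (continuous_snd.smul continuous_const)
  have hev : ∀ᶠ z : (Fin n → ℝ) × ℝ in 𝓝 (x₀, b),
      (evalMat z.1 F - z.2 • (1 : Matrix (Fin p) (Fin p) ℝ)).PosDef :=
    Matrix.PosDef.eventually hcont
      (fun z => isHermitian_sub_smul_one (isHermitian_evalMat hFs z.1) z.2) hb
  rw [nhds_prod_eq] at hev
  obtain ⟨P, hP, Q, hQ, hPQ⟩ := eventually_prod_iff.1 hev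
  obtain ⟨c, hc, hcb⟩ :=
    ((hQ.filter_mono nhdsWithin_le_nhds).and (self_mem_nhdsWithin (s := Set.Ioi b))).exists
  exact ⟨c, hcb, hP.mono fun x hx => hPQ hx hc⟩

end Penalty

/-- uniform positive definiteness of the penalized matrix on `[−C,C]ⁿ`
for large powers `k` (Proposition on which the constructive proof rests). -/
theorem penalized_posdef {n m p s : ℕ} (qd : Fin s → ℕ)
    (Y : Set (Fin m → ℝ)) (hYc : IsCompact Y)
    (ν : Measure (Fin m → ℝ)) (hsupp : hasSupport ν Y) (hmom : momentsFinite ν)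
    (G : ∀ j, Matrix (Fin (qd j)) (Fin (qd j)) (MvPolynomial (Fin n ⊕ Fin m) ℝ))
    (hGs : ∀ j, (G j).IsSymm)
    (F : Matrix (Fin p) (Fin p) (MvPolynomial (Fin n) ℝ)) (hFs : F.IsSymm)
    (hpd : ∀ x : Fin n → ℝ,
      (∀ j, ∀ y ∈ Y, (evalMat (Sum.elim x y) (G j)).PosSemidef) → (evalMat x F).PosDef) :
    ∀ C > (0 : ℝ), ∃ M > (0 : ℝ), ∃ kbar : ℕ, ∀ k ≥ kbar,
      ∀ x : Fin n → ℝ, (∀ i, |x i| ≤ C) →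
      (evalMat x (F - ∑ j,
        (lram (Matrix.kroneckerMap (· * ·)
            (1 : Matrix (Fin p) (Fin p) (MvPolynomial (Fin n ⊕ Fin m) ℝ))
            (((1 : Matrix (Fin (qd j)) (Fin (qd j)) (MvPolynomial (Fin n ⊕ Fin m) ℝ)) -
              (M⁻¹ : ℝ) • G j) ^ (2 * k)))
          (G j)).map (integY ν))).PosDef := by
  intro C hC
  have := hmom.isFiniteMeasure
  have hYν : ∀ᵐ y ∂ν, y ∈ Y := hsupp.1
  have hKc : IsCompact (Set.Icc (fun _ : Fin n => -C) fun _ => C) := isCompact_Icc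
  set K : Set (Fin n → ℝ) := Set.Icc (fun _ => -C) fun _ => C
  obtain ⟨M, hM0, hM⟩ := exists_trace_bound hKc hYc G
  refine ⟨M, hM0, ?_⟩
  let pen : ℕ → (Fin n → ℝ) → Fin s → ℝ := fun k x j =>
    ∫ y, ((1 - M⁻¹ • evalMat (Sum.elim x y) (G j)) ^ (2 * k) *
      evalMat (Sum.elim x y) (G j)).trace ∂ν
  suffices h : ∀ᶠ k : ℕ in Filter.atTop, ∀ x ∈ K,
      (evalMat x F - (∑ j, pen k x j) • (1 : Matrix (Fin p) (Fin p) ℝ)).PosDef by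
    obtain ⟨k₀, hk₀⟩ := Filter.eventually_atTop.1 h
    refine ⟨k₀, fun k hk x hx => ?_⟩
    rw [evalMat_penalized hmom G hGs]
    exact hk₀ k hk x ⟨fun i => (abs_le.1 (hx i)).1, fun i => (abs_le.1 (hx i)).2⟩
  let B : ℝ := ∑ j, ν.real Set.univ * (qd j * M)
  have hB : ∀ k : ℕ, ∑ j, ν.real Set.univ * (qd j * (M / (2 * (k : ℝ) + 1))) =
      B / (2 * k + 1) := fun k => by
    simp only [B, Finset.sum_div]
    exact Finset.sum_congr rfl fun j _ => by ring
  have hpen : ∀ k : ℕ, ∀ x ∈ K, ∀ j,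
      pen k x j ≤ ν.real Set.univ * (qd j * (M / (2 * (k : ℝ) + 1))) := fun k x hx j =>
    integral_penalty_le hYν hmom hGs hM0 (hM j x hx) k
  refine hKc.induction_on (p := fun t => ∀ᶠ k : ℕ in Filter.atTop, ∀ x ∈ t, x ∈ K →
      (evalMat x F - (∑ j, pen k x j) • (1 : Matrix (Fin p) (Fin p) ℝ)).PosDef)
    (by simp) (fun t u htu h => h.mono fun k hk x hx => hk x (htu hx))
    (fun t u ht hu => (ht.and hu).mono fun k hk x hx => hx.elim (hk.1 x) (hk.2 x))
    (fun x₀ _ => ?_) |>.mono fun k hk x hx => hk x hx hx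
  by_cases hfeas : ∀ j, ∀ y ∈ Y, (evalMat (Sum.elim x₀ y) (G j)).PosSemidef
  · obtain ⟨c, hc, hev⟩ := exists_shift_eventually_posDef hFs (x₀ := x₀) (b := 0)
      (by simpa using hpd x₀ hfeas)
    refine ⟨_, mem_nhdsWithin_of_mem_nhds hev, ?_⟩
    filter_upwards [(tendsto_const_div_two_mul_add_one B).eventually (gt_mem_nhds hc)]
      with k hk x hx hxK
    refine Matrix.PosDef.sub_smul_one_of_le hx ?_
    calc ∑ j, pen k x j ≤ B / (2 * k + 1) := by
          rw [← hB]; exact Finset.sum_le_sum fun j _ => hpen k x hxK j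
      _ ≤ c := hk.le
  · push Not at hfeas
    obtain ⟨j₀, y₀, hy₀, hneg⟩ := hfeas
    obtain ⟨U, hU, V, hVo, hνV, δ, hδ, v, hv⟩ := exists_neg_direction hsupp hGs hy₀ hneg
    obtain ⟨b, hb⟩ := (isHermitian_evalMat hFs x₀).exists_posDef_sub_smul_one
    obtain ⟨c, -, hev⟩ := exists_shift_eventually_posDef hFs hb
    refine ⟨_, mem_nhdsWithin_of_mem_nhds (hev.and hU), ?_⟩
    have hw : 0 < ν.real V * (2 * (δ ^ 2 / M)) := by
      have : 0 < ν.real V := ENNReal.toReal_pos hνV.ne' (measure_ne_top _ _)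
      positivity
    have hlim : Filter.Tendsto (fun k : ℕ => (k : ℝ) * (ν.real V * (2 * (δ ^ 2 / M))))
        Filter.atTop Filter.atTop := tendsto_natCast_atTop_atTop.atTop_mul_const hw
    filter_upwards [(tendsto_const_div_two_mul_add_one B).eventually (gt_mem_nhds one_pos),
      hlim.eventually_ge_atTop (1 - c)] with k hk1 hk2 x hx hxK
    refine Matrix.PosDef.sub_smul_one_of_le hx.1 ?_
    have hj₀ := integral_penalty_le_of_neg hYν hmom hGs hM0 (hM j₀ x hxK) hVo.measurableSet hδ
      (hv x hx.2) k
    have hrest := Finset.sum_le_sum (s := Finset.univ.erase j₀) fun j _ => hpen k x hxK j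
    have hsplit := hB k
    rw [← Finset.add_sum_erase _ _ (Finset.mem_univ j₀)] at hsplit ⊢
    change pen k x j₀ ≤ _ at hj₀
    linarith
end
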